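/- Let t(x,y) = (ȳ, x·ȳ). For x, y ∈ 𝕆 with ‖x‖ = ‖y‖ = 1, one has t(x,y) = (x,y) if and only if y = x̄ and x·(x·x) = 1. Hence the fixed set of t in S⁷ × S⁷ is {(x, x̄) : x ∈ 𝕆, ‖x‖ = 1, x³ = 1}. -/

import Mathlib

noncomputable section

/-- The octonions as the Cayley–Dickson double of the quaternions. -/
abbrev Oct : Type := Quaternion ℝ × Quaternion ℝ

namespace Oct

/-- Cayley–Dickson multiplication: (a,b)·(c,d) = (ac − d̄b, da + bc̄). -/
def mul (x y : Oct) : Oct :=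
  (x.1 * y.1 - star y.2 * x.2, y.2 * x.1 + x.2 * star y.1)

/-- The unit 1 = (1,0). -/
def one : Oct := (1, 0)

/-- Octonionic conjugation κ(a,b) = (ā, −b). -/
def conj (x : Oct) : Oct := (star x.1, -x.2)

/-- The squared Euclidean norm ‖(a,b)‖² = ‖a‖² + ‖b‖². -/
def normSq (x : Oct) : ℝ := ‖x.1‖ ^ 2 + ‖x.2‖ ^ 2

/-- Left multiplication L(s) : y ↦ s·y. -/
def L (s : Oct) : Oct → Oct := fun y => mul s y

/-- A linear automorphism of 𝕆 is an isometry if it preserves the Euclidean norm. -/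
def IsIsometry (A : Oct ≃ₗ[ℝ] Oct) : Prop := ∀ x, normSq (A x) = normSq x

/-- A triality triple: ℝ-linear isometric bijections with B(x·y) = (Cx)·(Ay). -/
def IsTriality (A B C : Oct ≃ₗ[ℝ] Oct) : Prop :=
  IsIsometry A ∧ IsIsometry B ∧ IsIsometry C ∧
    ∀ x y : Oct, B (mul x y) = mul (C x) (A y)

/-- Octonionic conjugation κ as an ℝ-linear equivalence. -/
def kappa : Oct ≃ₗ[ℝ] Oct where
  toFun := conj
  invFun := conj
  left_inv := fun x => by simp [conj]
  right_inv := fun x => by simp [conj]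
  map_add' := fun x y => by simp [conj, Prod.ext_iff, star_add, neg_add, add_comm]
  map_smul' := fun r x => by simp [conj, Prod.ext_iff]

/-- D ↦ κ∘D∘κ. -/
def conjOp (D : Oct ≃ₗ[ℝ] Oct) : Oct ≃ₗ[ℝ] Oct := kappa.trans (D.trans kappa)

/-- Triples of ℝ-linear bijections of 𝕆. -/
abbrev Triple := (Oct ≃ₗ[ℝ] Oct) × (Oct ≃ₗ[ℝ] Oct) × (Oct ≃ₗ[ℝ] Oct)

/-- The triality map τ(A,B,C) = (κBκ, κCκ, A). -/
def tauMap (T : Triple) : Triple := (conjOp T.2.1, conjOp T.2.2, T.1)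

/-- The outer involution σ(A,B,C) = (B, A, κCκ). -/
def sigmaMap (T : Triple) : Triple := (T.2.1, T.1, conjOp T.2.2)

/-- The induced map on S⁷ × S⁷: t(x,y) = (ȳ, x·ȳ). -/
def tS (p : Oct × Oct) : Oct × Oct := (conj p.2, mul p.1 (conj p.2))

/-- The swap s(x,y) = (y,x). -/
def swap (p : Oct × Oct) : Oct × Oct := (p.2, p.1)

end Oct

open Oct

theorem Oct.conj_conj (x : Oct) : conj (conj x) = x := by simp [conj]

theorem Oct.mul_one' (x : Oct) : mul x one = x := by simp [mul, one]

theorem Oct.normSq_conj (x : Oct) : normSq (conj x) = normSq x := by simp [conj, normSq]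

theorem Oct.conj_mul_mul (x z : Oct) (h : normSq x = 1) : mul (conj x) (mul x z) = z := by
  obtain ⟨p, q⟩ := x
  simp only [normSq] at h
  rw [pow_two, pow_two, ← Quaternion.normSq_eq_norm_mul_self, ← Quaternion.normSq_eq_norm_mul_self,
    Quaternion.normSq_def', Quaternion.normSq_def'] at h
  obtain ⟨r, s⟩ := z
  refine Prod.ext (QuaternionAlgebra.ext ?_ ?_ ?_ ?_) (QuaternionAlgebra.ext ?_ ?_ ?_ ?_) <;>
    simp [mul, conj]
  · linear_combination r.re * h
  · linear_combination r.imI * h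
  · linear_combination r.imJ * h
  · linear_combination r.imK * h
  · linear_combination s.re * h
  · linear_combination s.imI * h
  · linear_combination s.imJ * h
  · linear_combination s.imK * h

theorem Oct.mul_conj_self (x : Oct) (h : normSq x = 1) : mul x (conj x) = one := by
  have := conj_mul_mul (conj x) one (by rw [normSq_conj, h])
  rwa [mul_one', conj_conj] at this

theorem Oct.fixed_iff (x y : Oct) (h : normSq x = 1) :
    tS (x, y) = (x, y) ↔ (y = conj x ∧ mul x (mul x x) = one) := by
  simp only [tS, Prod.mk.injEq]
  constructor
  · rintro ⟨h1, h2⟩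
    have hy : y = conj x := by rw [← h1, conj_conj]
    rw [h1] at h2
    exact ⟨hy, by rw [h2, hy, mul_conj_self x h]⟩
  · rintro ⟨rfl, h2⟩
    have h3 := conj_mul_mul x (mul x x) h
    rw [h2, mul_one'] at h3
    rw [conj_conj]
    exact ⟨rfl, h3.symm⟩

/-- for unit x, y, t(x,y) = (x,y) iff y = x̄ and x³ = 1; hence the fixed
set of t in S⁷ × S⁷ is {(x, x̄) : ‖x‖ = 1, x³ = 1}. -/
theorem tS_fixed_points :
    (∀ x y : Oct, normSq x = 1 → normSq y = 1 →
      (tS (x, y) = (x, y) ↔ (y = conj x ∧ mul x (mul x x) = one)))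
    ∧ {p : Oct × Oct | normSq p.1 = 1 ∧ normSq p.2 = 1 ∧ tS p = p}
        = {p : Oct × Oct | ∃ x : Oct, normSq x = 1 ∧ mul x (mul x x) = one
            ∧ p = (x, conj x)} := by
  refine ⟨fun x y hx _ => fixed_iff x y hx, ?_⟩
  ext ⟨x, y⟩
  simp only [Set.mem_ofPred_eq]
  constructor
  · rintro ⟨hx, _, ht⟩
    obtain ⟨rfl, h3⟩ := (fixed_iff x y hx).1 ht
    exact ⟨x, hx, h3, rfl⟩
  · rintro ⟨z, hz, h3, he⟩
    obtain ⟨rfl, rfl⟩ := Prod.mk.inj he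
    exact ⟨hz, by rw [normSq_conj, hz], (fixed_iff _ _ hz).2 ⟨rfl, h3⟩⟩
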